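/- arXiv:2509.18586 — 2 statements merged into one kernel-verified Lean document; each statement's English description precedes it below -/
import Mathlib

section
/- Fix x ∈ [M] and an integer t with 0 ≤ t ≤ N − 1. Let H_R be a complex Hilbert space containing pairwise orthogonal unit vectors {|φ_y⟩}_{y ∈ [N]}, and let ψ = Σ_{D : x ∈ Dom(D)} α_D |D⟩ ⊗ |φ_{D(x)}⟩ be a vector in H(D) ⊗ H_R with ‖ψ‖ ≤ 1 (a record of the output at x is held outside the database register). Let G_x be any operator of the form in the canonical-compression construction: for each D with x ∉ Dom(D), a set S_{x,D} ⊆ [N] with |S_{x,D}| ≥ N − t, |S_{x,D}⟩ := |S_{x,D}|^{-1/2} Σ_{y∈S_{x,D}} |D[x→y]⟩, G_{x,D} := 1 − |D⟩⟨D| − |S_{x,D}⟩⟨S_{x,D}| + |D⟩⟨S_{x,D}| + |S_{x,D}⟩⟨D|, and G_x := ⊕_D G_{x,D}. Then there is a universal constant C > 0 such that ‖(1 − G_x ⊗ 1_R) ψ‖ ≤ C/√(N − t). -/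
/-! Fix a database `D` undefined at `x` and look at the block spanned by `D` and its extensions
`D[x→y]`. Since `ψ` has no component on `D`, the operator `1 - G_x` acts on this block as
`(|S_{x,D}⟩ - |D⟩) ⟨S_{x,D}|`, so it sends `ψ` to `(|S_{x,D}⟩ - |D⟩) ⊗ v_D` with
`v_D = (⟨S_{x,D}| ⊗ 1) ψ = |S|^{-1/2} ∑_{y ∈ S} α(D[x→y]) φ_y` (`overlap`). The records `φ_y` are
orthonormal, hence `‖v_D‖² = |S|⁻¹ ∑_{y ∈ S} |α(D[x→y])|²` (`norm_overlap_sq`), and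
`|S_{x,D}⟩ - |D⟩` has squared norm `2`. Summing over the mutually orthogonal blocks (`sum_split`)
bounds the squared norm by `2 / (N - t)`, so `C = √2` works. -/

/-! Compressed-oracle Hilbert space over function databases `[M] ⇀ [N]`. -/

namespace CPO

/-- A function database: a partial function `[M] ⇀ [N]`. -/
abbrev DBf (M N : ℕ) := Fin M → Option (Fin N)

/-- The Hilbert space with orthonormal basis indexed by databases. -/
abbrev HD (M N : ℕ) := EuclideanSpace ℂ (DBf M N)

/-- Basis vector `|D⟩`. -/
noncomputable def eD {M N : ℕ} (D : DBf M N) : HD M N := EuclideanSpace.single D 1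

/-- `|a⟩⟨b|` as an operator: `ψ ↦ ⟪b, ψ⟫ • a`. -/
noncomputable def ketbra {M N : ℕ} (a b : HD M N) : HD M N →L[ℂ] HD M N :=
  (innerSL ℂ b).smulRight a

/-- The block correction `|plus⟩⟨base| + |base⟩⟨plus| − |plus⟩⟨plus| − |base⟩⟨base|`. -/
noncomputable def blockCorr {M N : ℕ} (base plus : HD M N) : HD M N →L[ℂ] HD M N :=
  ketbra plus base + ketbra base plus - ketbra plus plus - ketbra base base

/-- `|+_{x,D}⟩ = N^{-1/2} Σ_y |D[x→y]⟩`. -/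
noncomputable def plusD {M N : ℕ} (x : Fin M) (D : DBf M N) : HD M N :=
  (((Real.sqrt N : ℝ) : ℂ))⁻¹ • ∑ y : Fin N, eD (Function.update D x (some y))

/-- The function compression operator `fC_x`. -/
noncomputable def fC {M N : ℕ} (x : Fin M) : HD M N →L[ℂ] HD M N :=
  1 + ∑ D : DBf M N, if D x = none then blockCorr (eD D) (plusD x D) else 0

/-- `|S_{x,D}⟩ = |S|^{-1/2} Σ_{y∈S} |D[x→y]⟩`. -/
noncomputable def svecD {M N : ℕ} (x : Fin M) (S : Finset (Fin N)) (D : DBf M N) : HD M N :=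
  (((Real.sqrt S.card : ℝ) : ℂ))⁻¹ • ∑ y ∈ S, eD (Function.update D x (some y))

/-- The modified compression operator `G_x` determined by the family of sets
`S_{x,D}`. -/
noncomputable def Gop {M N : ℕ} (x : Fin M) (S : DBf M N → Finset (Fin N)) :
    HD M N →L[ℂ] HD M N :=
  1 + ∑ D : DBf M N, if D x = none then blockCorr (eD D) (svecD x (S D) D) else 0

end CPO
namespace CPO

/-- The joint space `H(D) ⊗ H_R`, modelled as an `L²` direct sum of copies of
`H_R` indexed by databases. -/
abbrev JS (M N : ℕ) (HR : Type) [NormedAddCommGroup HR] [InnerProductSpace ℂ HR] :=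
  PiLp 2 (fun _ : DBf M N => HR)

/-- `G ⊗ 1` applied to a vector of the joint space. -/
noncomputable def tensorApp {M N : ℕ} {HR : Type} [NormedAddCommGroup HR]
    [InnerProductSpace ℂ HR] (G : HD M N →L[ℂ] HD M N) (ψ : JS M N HR) : JS M N HR :=
  (WithLp.equiv 2 _).symm (fun D => ∑ D' : DBf M N, (G (eD D')) D • ψ D')

lemma update_some_inj {M N : ℕ} {x : Fin M} {D D' : DBf M N} (hD : D x = none)
    (hD' : D' x = none) {y y' : Fin N}
    (h : Function.update D x (some y) = Function.update D' x (some y')) : D = D' ∧ y = y' := by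
  refine ⟨?_, by simpa using congrFun h x⟩
  have := congrArg (fun E => Function.update E x none) h
  simp only [Function.update_idem] at this
  rwa [← hD, Function.update_eq_self, hD, ← hD', Function.update_eq_self] at this

open Finset in
/-- Every database is either undefined at `x`, or arises from a unique `D` undefined at `x` by
adding one pair `(x, y)`; a sum over all databases splits accordingly. -/
lemma sum_split {M N : ℕ} (x : Fin M) {A : Type*} [AddCommMonoid A] (f : DBf M N → A) :
    ∑ E, f E = ∑ D with D x = none, (f D + ∑ y, f (Function.update D x (some y))) := by
  rw [sum_add_distrib, ← sum_filter_add_sum_filter_not univ (fun D : DBf M N => D x = none) f]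
  congr 1
  rw [← sum_product' _ _ (fun D y => f (Function.update D x (some y)))]
  symm
  refine sum_bij (fun p _ => Function.update p.1 x (some p.2)) ?_ ?_ ?_ ?_
  · intro p hp; simp
  · rintro ⟨D, y⟩ hp ⟨D', y'⟩ hp' h
    simp only [mem_product, mem_filter, mem_univ, true_and, and_true] at hp hp'
    obtain ⟨h1, h2⟩ := update_some_inj hp hp' h
    exact Prod.ext h1 h2
  · intro E hE
    simp only [mem_filter, mem_univ, true_and] at hE
    obtain ⟨y, hy⟩ := Option.ne_none_iff_exists'.mp hE
    exact ⟨(Function.update E x none, y), by simp, by simp [← hy]⟩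
  · intro p hp; rfl

lemma svecD_apply {M N : ℕ} (x : Fin M) (S : Finset (Fin N)) (D E : DBf M N) :
    svecD x S D E = ((Real.sqrt S.card : ℝ) : ℂ)⁻¹ *
      ∑ y ∈ S, if E = Function.update D x (some y) then 1 else 0 := by
  simp [svecD, eD, Pi.single_apply]

lemma svecD_apply_none {M N : ℕ} {x : Fin M} (S : Finset (Fin N)) (D : DBf M N) {E : DBf M N}
    (hE : E x = none) : svecD x S D E = 0 := by
  rw [svecD_apply, Finset.sum_eq_zero, mul_zero]
  intro y _
  rw [if_neg]
  rintro rfl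
  simp at hE

lemma svecD_apply_update {M N : ℕ} {x : Fin M} (S : Finset (Fin N)) {D E : DBf M N}
    (hD : D x = none) (hE : E x = none) (y : Fin N) :
    svecD x S D (Function.update E x (some y)) =
      if D = E ∧ y ∈ S then ((Real.sqrt S.card : ℝ) : ℂ)⁻¹ else 0 := by
  rw [svecD_apply]
  by_cases h : D = E
  · subst h
    have : ∀ z, (Function.update D x (some y) = Function.update D x (some z)) ↔ y = z := by
      intro z
      exact ⟨fun h => (update_some_inj hD hD h).2, fun h => by rw [h]⟩
    simp [this]
  · rw [Finset.sum_eq_zero]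
    · simp [h]
    · intro z _
      rw [if_neg]
      intro h'
      exact h (update_some_inj hE hD h').1.symm

/-- The `H_R`-valued amplitude `(⟨S_{x,D}| ⊗ 1) ψ`. -/
noncomputable def overlap {M N : ℕ} {HR : Type} [NormedAddCommGroup HR]
    [InnerProductSpace ℂ HR] (x : Fin M) (S : DBf M N → Finset (Fin N)) (ψ : JS M N HR)
    (D : DBf M N) : HR :=
  ∑ D' : DBf M N, (starRingEnd ℂ (svecD x (S D) D D')) • ψ D'

/-- On vectors without an undefined component at `x`, `(1 - G_x) ⊗ 1` reduces to
`∑_D (|S_{x,D}⟩ - |D⟩) ⊗ (⟨S_{x,D}| ⊗ 1) ψ`. -/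
lemma sub_tensorApp_apply {M N : ℕ} {HR : Type} [NormedAddCommGroup HR]
    [InnerProductSpace ℂ HR] (x : Fin M) (S : DBf M N → Finset (Fin N)) (ψ : JS M N HR)
    (h0 : ∀ D, D x = none → ψ D = 0) (E : DBf M N) :
    (ψ - tensorApp (Gop x S) ψ) E =
      ∑ D with D x = none, (svecD x (S D) D E - eD D E) • overlap x S ψ D := by
  have key : ∀ D' : DBf M N, (Gop x S (eD D')) E • ψ D' = (if E = D' then ψ D' else 0) -
      ∑ D with D x = none, (svecD x (S D) D E - eD D E) •
        (starRingEnd ℂ (svecD x (S D) D D')) • ψ D' := by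
    intro D'
    by_cases hD' : D' x = none
    · simp [h0 D' hD']
    · have : (Gop x S (eD D')) E = (if E = D' then 1 else 0) -
          ∑ D with D x = none, (svecD x (S D) D E - eD D E) *
            (starRingEnd ℂ (svecD x (S D) D D')) := by
        rw [Gop, ← Finset.sum_filter, sub_eq_add_neg, ← Finset.sum_neg_distrib]
        simp only [add_apply, one_apply_eq_self, sum_apply, PiLp.add_apply, WithLp.ofLp_sum, Finset.sum_apply]
        congr 1
        · simp [eD]
        · refine Finset.sum_congr rfl fun D hD => ?_
          have hne : D ≠ D' := by
            rintro rfl; simp at hD; exact hD' hD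
          have hb : inner ℂ (eD D) (eD D') = 0 := by
            rw [eD, eD, EuclideanSpace.inner_single_right]
            simp [Ne.symm hne]
          have hs : inner ℂ (svecD x (S D) D) (eD D') =
              starRingEnd ℂ (svecD x (S D) D D') := by
            rw [eD, EuclideanSpace.inner_single_right, one_mul]
          simp only [blockCorr, ketbra, sub_apply, add_apply, ContinuousLinearMap.smulRight_apply,
            innerSL_apply_apply, hb, hs, PiLp.add_apply, PiLp.sub_apply, PiLp.smul_apply,
            smul_eq_mul]
          ring
      rw [this, sub_smul, Finset.sum_smul]
      simp only [mul_smul, ite_smul, one_smul, zero_smul]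
  have : tensorApp (Gop x S) ψ E = ∑ D', (Gop x S (eD D')) E • ψ D' := rfl
  rw [PiLp.sub_apply, this, Finset.sum_congr rfl fun D' _ => key D', Finset.sum_sub_distrib,
    Finset.sum_comm]
  simp [overlap, Finset.smul_sum]

lemma sub_tensorApp_none {M N : ℕ} {HR : Type} [NormedAddCommGroup HR]
    [InnerProductSpace ℂ HR] (x : Fin M) (S : DBf M N → Finset (Fin N)) (ψ : JS M N HR)
    (h0 : ∀ D, D x = none → ψ D = 0) {E : DBf M N} (hE : E x = none) :
    (ψ - tensorApp (Gop x S) ψ) E = - overlap x S ψ E := by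
  rw [sub_tensorApp_apply x S ψ h0, Finset.sum_eq_single E]
  · simp [svecD_apply_none _ _ hE, eD]
  · intro D _ hD
    simp [svecD_apply_none _ _ hE, eD, Ne.symm hD]
  · simp [hE]

lemma sub_tensorApp_update {M N : ℕ} {HR : Type} [NormedAddCommGroup HR]
    [InnerProductSpace ℂ HR] (x : Fin M) (S : DBf M N → Finset (Fin N)) (ψ : JS M N HR)
    (h0 : ∀ D, D x = none → ψ D = 0) {E : DBf M N} (hE : E x = none) (y : Fin N) :
    (ψ - tensorApp (Gop x S) ψ) (Function.update E x (some y)) =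
      if y ∈ S E then ((Real.sqrt (S E).card : ℝ) : ℂ)⁻¹ • overlap x S ψ E else 0 := by
  have he : ∀ D : DBf M N, D x = none → eD D (Function.update E x (some y)) = 0 := by
    intro D hD
    have : Function.update E x (some y) ≠ D := by
      rintro rfl; simp at hD
    simp [eD, this]
  rw [sub_tensorApp_apply x S ψ h0, Finset.sum_eq_single E]
  · rw [he E hE, svecD_apply_update _ hE hE]
    simp
  · intro D hD hDE
    simp only [Finset.mem_filter, Finset.mem_univ, true_and] at hD
    rw [he D hD, svecD_apply_update _ hD hE]
    simp [hDE]
  · simp [hE]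

/-- Orthogonality of the records `φ y` turns the a priori coherent sum defining the overlap into
an incoherent one, which gains the factor `1 / |S_{x,D}|`. -/
lemma norm_overlap_sq {M N : ℕ} {HR : Type} [NormedAddCommGroup HR]
    [InnerProductSpace ℂ HR] (x : Fin M) (S : DBf M N → Finset (Fin N)) (ψ : JS M N HR)
    {φ : Fin N → HR} (hφ : Orthonormal ℂ φ) (α : DBf M N → ℂ) {D : DBf M N} (hD : D x = none)
    (h1 : ∀ y, ψ (Function.update D x (some y)) = α (Function.update D x (some y)) • φ y) :
    ‖overlap x S ψ D‖ ^ 2 =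
      ((S D).card : ℝ)⁻¹ * ∑ y ∈ S D, ‖α (Function.update D x (some y))‖ ^ 2 := by
  have hv : overlap x S ψ D = ((Real.sqrt (S D).card : ℝ) : ℂ)⁻¹ •
      ∑ y ∈ S D, α (Function.update D x (some y)) • φ y := by
    rw [overlap, sum_split x, Finset.sum_eq_single D]
    · simp only [svecD_apply_none _ _ hD, svecD_apply_update _ hD hD, h1, map_zero, zero_smul,
        zero_add, true_and, Finset.smul_sum]
      simp only [apply_ite (starRingEnd ℂ), map_zero, ite_smul, zero_smul, Finset.sum_ite_mem,
        Finset.univ_inter, map_inv₀, Complex.conj_ofReal]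
    · intro E hE hne
      simp only [Finset.mem_filter, Finset.mem_univ, true_and] at hE
      simp [svecD_apply_none _ _ hE, svecD_apply_update _ hD hE, Ne.symm hne]
    · simp [hD]
  have hn : ‖∑ y ∈ S D, α (Function.update D x (some y)) • φ y‖ ^ 2 =
      ∑ y ∈ S D, ‖α (Function.update D x (some y))‖ ^ 2 := by
    have := hφ.inner_sum (fun y => α (Function.update D x (some y)))
      (fun y => α (Function.update D x (some y))) (S D)
    rw [inner_self_eq_norm_sq_to_K] at this
    simp only [Complex.conj_mul'] at this
    apply Complex.ofReal_injective
    push_cast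
    exact this
  rw [hv, norm_smul, mul_pow, hn, norm_inv, Complex.norm_real, Real.norm_of_nonneg (by positivity),
    inv_pow, Real.sq_sqrt (by positivity)]

/-- If a record of the database output at `x` is kept outside
the database register, then any canonical-compression-type operator `G_x` acts
almost as the identity. -/
theorem recorded_output_no_compression :
    ∃ C : ℝ, 0 < C ∧ ∀ (M N : ℕ), 1 ≤ M → 1 ≤ N → ∀ (x : Fin M) (t : ℕ), t ≤ N - 1 →
      ∀ (HR : Type) (_ : NormedAddCommGroup HR), ∀ (_ : InnerProductSpace ℂ HR),
      ∀ (φ : Fin N → HR), Orthonormal ℂ φ →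
      ∀ (α : DBf M N → ℂ),
      ∀ S : DBf M N → Finset (Fin N), (∀ D : DBf M N, D x = none → N - t ≤ (S D).card) →
      ∀ ψ : JS M N HR,
        ψ = (WithLp.equiv 2 _).symm
          (fun D => match D x with | some y => α D • φ y | none => 0) →
        ‖ψ‖ ≤ 1 →
        ‖ψ - tensorApp (Gop x S) ψ‖ ≤ C / Real.sqrt ((N : ℝ) - t) := by
  refine ⟨Real.sqrt 2, by positivity, ?_⟩
  intro M N hM hN x t ht HR _ _ φ hφ α S hS ψ hψ hnorm
  have h0 : ∀ D, D x = none → ψ D = 0 := by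
    intro D hD
    simp [hψ, hD]
  have h1 : ∀ D y, ψ (Function.update D x (some y)) =
      α (Function.update D x (some y)) • φ y := by
    intro D y
    simp [hψ]
  have htN : (0 : ℝ) < (N : ℝ) - t := by
    have : t < N := by omega
    have : (t : ℝ) < N := by exact_mod_cast this
    linarith
  have hcard : ∀ D : DBf M N, D x = none → (N : ℝ) - t ≤ ((S D).card : ℝ) := by
    intro D hD
    have : N ≤ (S D).card + t := by have := hS D hD; omega
    have : (N : ℝ) ≤ (S D).card + t := by exact_mod_cast this
    linarith
  have hψsq : ∑ D with D x = none, ∑ y, ‖α (Function.update D x (some y))‖ ^ 2 ≤ 1 := by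
    have h : ‖ψ‖ ^ 2 = ∑ D with D x = none, ∑ y, ‖α (Function.update D x (some y))‖ ^ 2 := by
      rw [PiLp.norm_sq_eq_of_L2, sum_split x]
      refine Finset.sum_congr rfl fun D hD => ?_
      simp only [Finset.mem_filter, Finset.mem_univ, true_and] at hD
      simp [h0 D hD, h1, norm_smul, hφ.1]
    rw [← h]
    exact pow_le_one₀ (norm_nonneg _) hnorm
  have hsq : ‖ψ - tensorApp (Gop x S) ψ‖ ^ 2 ≤ 2 / ((N : ℝ) - t) := by
    rw [PiLp.norm_sq_eq_of_L2, sum_split x]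
    calc _ ≤ ∑ D with D x = none, 2 / ((N : ℝ) - t) *
          ∑ y, ‖α (Function.update D x (some y))‖ ^ 2 := by
          refine Finset.sum_le_sum fun D hD => ?_
          simp only [Finset.mem_filter, Finset.mem_univ, true_and] at hD
          have hc := hcard D hD
          have hpos : (0 : ℝ) < (S D).card := htN.trans_le hc
          have hb : ∑ y, ‖(ψ - tensorApp (Gop x S) ψ) (Function.update D x (some y))‖ ^ 2 =
              ‖overlap x S ψ D‖ ^ 2 := by
            have : ∀ y, ‖(ψ - tensorApp (Gop x S) ψ) (Function.update D x (some y))‖ ^ 2 =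
                if y ∈ S D then ((S D).card : ℝ)⁻¹ * ‖overlap x S ψ D‖ ^ 2 else 0 := by
              intro y
              rw [sub_tensorApp_update x S ψ h0 hD]
              split_ifs
              · rw [norm_smul, mul_pow, norm_inv, Complex.norm_real,
                  Real.norm_of_nonneg (by positivity), inv_pow, Real.sq_sqrt (by positivity)]
              · simp
            simp only [this, Finset.sum_ite_mem, Finset.univ_inter, Finset.sum_const,
              nsmul_eq_mul]
            field_simp
          rw [hb, sub_tensorApp_none x S ψ h0 hD, norm_neg,
            norm_overlap_sq x S ψ hφ α hD (h1 D), ← two_mul, ← mul_assoc, ← div_eq_mul_inv]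
          gcongr
          exact Finset.subset_univ _
      _ ≤ 2 / ((N : ℝ) - t) := by
          rw [← Finset.mul_sum]
          exact mul_le_of_le_one_right (by positivity) hψsq
  rw [← Real.sqrt_div (by norm_num)]
  exact Real.le_sqrt_of_sq_le hsq

end CPO
end

section
/- There exist universal constants C > 0 and c > 0 such that for all n ≥ 1 and all t ≤ c·2^{n/3}, every partial injective function I on {0,1}^{2n} with |I| = t, and every x ∉ Dom(I): if (π,ω) is drawn from the two-round-Feistel twirl distribution D conditioned on resolving I (assuming this event has positive probability), then Pr[(π,ω) ∈ R_{x,I}] ≥ 1 − C·t²/2^n. -/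
/-!
Write `q = 2 ^ n` and let `ρ` denote the inverse of `ω`, itself a two-round Feistel permutation.
Everything is a union bound over the events
`E(x, x', y, y') : π(x)_L ⊕ π(x')_L = ρ(y)_L ⊕ ρ(y')_L`.

If `x ≠ x'` or `y ≠ y'`, such an event has probability at most `2 / q` (`card_event_mul_le`): when
`x ≠ x'`, either the middle words `x_R ⊕ f₁(x_L)` and `x'_R ⊕ f₁(x'_L)` agree, which has probability
at most `1 / q`, or `f₂` is evaluated at two different points and the XOR of its values is uniform.

* A pair `(π, ω)` that fails to resolve `I` lies in one of at most `t ^ 3` such events, because the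
  internal-collision condition already implies the two others (`allowable_of_internal`). For
  `t ≤ 2 ^ (n / 3) / 3` the pair therefore resolves `I` with probability at least `1 / 2`.
* If `A` is allowable and `3 t ^ 3 < q`, then some `v` makes `A[u → v]` allowable unless
  `u_L ⊕ x_L = y_L ⊕ y'_L` for some `(x, y) ∈ A` and `y' ∈ Im A`: all the remaining conditions forbid
  at most `t + t ^ 2 + t ^ 3` values of `v_L` (`allows_of_forall_ne`). So a pair that resolves `I`
  but does not allow `π(x)` lies in one of `t ^ 2` events, which costs `2 t ^ 2 / q`.

Dividing by the probability at least `1 / 2` of resolving gives the bound with `C = 4`, `c = 1 / 3`.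
-/

/-! Common setup: bit strings, databases, chains, canonical triples,
allowable partial injective functions, twirling. -/

instance (w : ℕ) : Fintype (BitVec w) :=
  Fintype.ofEquiv (Fin (2 ^ w)) ⟨BitVec.ofFin, BitVec.toFin, fun _ => rfl, fun _ => rfl⟩

namespace CPO

/-- `W n` is the set of `n`-bit strings. -/
abbrev W (n : ℕ) := BitVec n

/-- `TW n` models `{0,1}^{2n}` as a pair (left half, right half). -/
abbrev TW (n : ℕ) := BitVec n × BitVec n

/-- A database: a partial function from `{0,1}^n` to `{0,1}^n`. -/
abbrev DB (n : ℕ) := BitVec n → Option (BitVec n)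

/-- A triple of databases `(D_h, D_k, D_f)`. -/
abbrev T3 (n : ℕ) := DB n × DB n × DB n

/-- A partial function on `{0,1}^{2n}`. -/
abbrev PF (n : ℕ) := TW n → Option (TW n)

/-- Domain of a database. -/
def dbDom {n : ℕ} (D : DB n) : Set (W n) := {w | D w ≠ none}

/-- Size of a database. -/
noncomputable def dbSize {n : ℕ} (D : DB n) : ℕ := (dbDom D).ncard

/-- Partial injectivity. -/
def PInj {n : ℕ} (I : PF n) : Prop :=
  ∀ x x' y, I x = some y → I x' = some y → x = x'

def piDom {n : ℕ} (I : PF n) : Set (TW n) := {x | I x ≠ none}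

def piIm {n : ℕ} (I : PF n) : Set (TW n) := {y | ∃ x, I x = some y}

noncomputable def piSize {n : ℕ} (I : PF n) : ℕ := (piDom I).ncard

/-- There is a chain `(u, m, v)` in the triple `T = (D_h, D_k, D_f)`:
`D_h(u_L) ⊕ u_R = m = D_f(v_L) ⊕ v_R` and `u_L ⊕ v_L = D_k(m)`. -/
def IsChain {n : ℕ} (T : T3 n) (u : TW n) (m : W n) (v : TW n) : Prop :=
  T.1 u.1 = some (m ^^^ u.2) ∧ T.2.2 v.1 = some (m ^^^ v.2) ∧ T.2.1 m = some (u.1 ^^^ v.1)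

/-- The set of chains of a triple, as triples `(u, (m, v))`. -/
def chainsSet {n : ℕ} (T : T3 n) : Set (TW n × W n × TW n) :=
  {c | IsChain T c.1 c.2.1 c.2.2}

/-- Two chains collide if they share `m`, `u_L` or `v_L`. -/
def Collide {n : ℕ} (c c' : TW n × W n × TW n) : Prop :=
  c.2.1 = c'.2.1 ∨ c.1.1 = c'.1.1 ∨ c.2.2.1 = c'.2.2.1

/-- A triple is canonical if no two distinct chains collide and every
input-output pair of each database participates in exactly one chain. -/
def Canonical {n : ℕ} (T : T3 n) : Prop :=
  (∀ c ∈ chainsSet T, ∀ c' ∈ chainsSet T, c ≠ c' → ¬ Collide c c') ∧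
  (∀ w, T.1 w ≠ none → ∃! c, c ∈ chainsSet T ∧ c.1.1 = w) ∧
  (∀ m, T.2.1 m ≠ none → ∃! c, c ∈ chainsSet T ∧ c.2.1 = m) ∧
  (∀ w, T.2.2 w ≠ none → ∃! c, c ∈ chainsSet T ∧ c.2.2.1 = w)

/-- `Supports T I` : the partial function supported by `T` is exactly `I`
(i.e. `Supp(T) = I`). -/
def Supports {n : ℕ} (T : T3 n) (I : PF n) : Prop :=
  ∀ u v, I u = some v ↔ ∃ m, IsChain T u m v

open Classical in
/-- The partial function supported by a triple (choice-based representative). -/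
noncomputable def suppFun {n : ℕ} (T : T3 n) : PF n :=
  fun u => if h : ∃ v, ∃ m, IsChain T u m v then some h.choose else none

/-- An allowable partial injective function: no input, output, or internal
left collisions. -/
def AllowableI {n : ℕ} (I : PF n) : Prop :=
  PInj I ∧
  (∀ x x', x ∈ piDom I → x' ∈ piDom I → x ≠ x' → x.1 ≠ x'.1) ∧
  (∀ y y', y ∈ piIm I → y' ∈ piIm I → y ≠ y' → y.1 ≠ y'.1) ∧
  (∀ x y x' y', I x = some y → x' ∈ piDom I → y' ∈ piIm I →
    (x, y) ≠ (x', y') → x.1 ^^^ y.1 ≠ x'.1 ^^^ y'.1)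

/-- `A` allows `u` if some extension `A[u→v]` is allowable. -/
def Allows {n : ℕ} (A : PF n) (u : TW n) : Prop :=
  ∃ v, AllowableI (Function.update A u (some v))

/-- `V_{u,A}`: the set of `v` such that `A[u→v]` is allowable. -/
def Vset {n : ℕ} (A : PF n) (u : TW n) : Set (TW n) :=
  {v | AllowableI (Function.update A u (some v))}

/-- `L_{u,A}`: the set of left substrings of elements of `V_{u,A}`. -/
def Lset {n : ℕ} (A : PF n) (u : TW n) : Set (W n) :=
  {c | ∃ v ∈ Vset A u, v.1 = c}

/-- `D(I)`: the set of canonical triples supporting `I`. -/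
def DofA {n : ℕ} (I : PF n) : Set (T3 n) := {T | Canonical T ∧ Supports T I}

end CPO
namespace CPO

/-- `π * I * ω := {(π(x), ω⁻¹(y)) : (x,y) ∈ I}`, as a partial function. -/
def twirl {n : ℕ} (π ω : Equiv.Perm (TW n)) (I : PF n) : PF n :=
  fun a => (I (π.symm a)).map ω.symm

/-- `(π, ω)` resolves `I` if `π * I * ω` is allowable. -/
def Resolves {n : ℕ} (π ω : Equiv.Perm (TW n)) (I : PF n) : Prop :=
  AllowableI (twirl π ω I)

/-- `R_I`: the set of permutation pairs resolving `I`. -/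
def RI {n : ℕ} (I : PF n) : Set (Equiv.Perm (TW n) × Equiv.Perm (TW n)) :=
  {p | Resolves p.1 p.2 I}

/-- `R_{x,I}`: the pairs resolving `I` whose inner database allows `π(x)`. -/
def RxI {n : ℕ} (I : PF n) (x : TW n) : Set (Equiv.Perm (TW n) × Equiv.Perm (TW n)) :=
  {p | p ∈ RI I ∧ Allows (twirl p.1 p.2 I) (p.1 x)}

end CPO
namespace CPO

/-- Forward two-round Feistel with round functions `f1, f2`. -/
def feistF {n : ℕ} (f1 f2 : W n → W n) : TW n → TW n :=
  fun x => (x.1 ^^^ f2 (x.2 ^^^ f1 x.1), x.2 ^^^ f1 x.1)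

/-- Inverse of the two-round Feistel. -/
def feistB {n : ℕ} (f1 f2 : W n → W n) : TW n → TW n :=
  fun y => (y.1 ^^^ f2 y.2, y.2 ^^^ f1 (y.1 ^^^ f2 y.2))

/-- The two-round Feistel permutation. -/
def feistPerm {n : ℕ} (f1 f2 : W n → W n) : Equiv.Perm (TW n) where
  toFun := feistF f1 f2
  invFun := feistB f1 f2
  left_inv := by
    intro x
    simp [feistF, feistB, BitVec.xor_assoc]
  right_inv := by
    intro y
    simp [feistF, feistB, BitVec.xor_assoc]

/-- Samples for the masked-Feistel twirl: two pairs of round functions. -/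
abbrev FT (n : ℕ) := ((W n → W n) × (W n → W n)) × ((W n → W n) × (W n → W n))

/-- The permutation pair `(π, ω)` obtained from a sample: `π` is a two-round
Feistel and `ω` the inverse of an (independent) two-round Feistel. -/
def sampPair {n : ℕ} (F : FT n) : Equiv.Perm (TW n) × Equiv.Perm (TW n) :=
  (feistPerm F.1.1 F.1.2, (feistPerm F.2.1 F.2.2).symm)

end CPO
namespace CPO

/-! ### Probability of a collision event -/

lemma xor_swap {n : ℕ} {a b c d : W n} (h : a ^^^ b = c ^^^ d) : a ^^^ c = b ^^^ d := by
  have h1 : a = c ^^^ d ^^^ b := by rw [← h, BitVec.xor_assoc, BitVec.xor_self, BitVec.xor_zero]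
  rw [h1, BitVec.xor_assoc c d b, BitVec.xor_comm c, BitVec.xor_assoc, BitVec.xor_self,
    BitVec.xor_zero, BitVec.xor_comm]

lemma xor_solve {n : ℕ} {a b c d : W n} (h : a ^^^ b = c ^^^ d) : b = a ^^^ c ^^^ d := by
  rw [BitVec.xor_assoc, ← h, ← BitVec.xor_assoc, BitVec.xor_self, BitVec.zero_xor]

open Classical in
/-- The XOR of the values of a uniform function at two distinct points takes any given value with
probability at most `1 / 2 ^ n`. -/
lemma card_xor_eq_mul_le {n : ℕ} {p p' : W n} (h : p ≠ p') (b : W n) :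
    (Finset.univ.filter fun f : W n → W n => f p ^^^ f p' = b).card * Fintype.card (W n)
      ≤ Fintype.card (W n → W n) := by
  rw [← Finset.card_univ (α := W n), ← Finset.card_product, ← Finset.card_univ]
  -- Overwriting the value at `p` by an arbitrary word loses nothing: `f p` is `b ⊕ f p'`.
  refine Finset.card_le_card_of_injOn (fun s => Function.update s.1 p s.2)
    (fun _ _ => Finset.mem_coe.2 (Finset.mem_univ _)) ?_
  rintro ⟨f, w⟩ hf ⟨g, w'⟩ hg he
  simp only [Finset.coe_product, Finset.coe_filter, Finset.mem_univ, true_and, Set.mem_prod,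
    Set.mem_ofPred_eq, Finset.coe_univ, Set.mem_univ, and_true] at hf hg
  have hv : ∀ z, z ≠ p → f z = g z := by
    intro z hz
    have := congrFun he z
    simpa [Function.update_of_ne hz] using this
  have hw : w = w' := by simpa using congrFun he p
  have hp : f p = g p := by
    have h1 := hf.trans hg.symm
    rw [hv p' h.symm] at h1
    exact (BitVec.xor_left_inj _).1 h1
  refine Prod.ext (funext fun z => ?_) hw
  by_cases hz : z = p
  · rw [hz]; exact hp
  · exact hv z hz

open Classical in
/-- The XOR of the left halves of the images of two distinct points under a random two-round Feistel
permutation takes any given value with probability at most `2 / 2 ^ n`. -/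
lemma card_feist_mul_le {n : ℕ} {x x' : TW n} (h : x ≠ x') (a : W n) :
    (Finset.univ.filter fun f : (W n → W n) × (W n → W n) =>
        (feistF f.1 f.2 x).1 ^^^ (feistF f.1 f.2 x').1 = a).card * Fintype.card (W n)
      ≤ 2 * Fintype.card ((W n → W n) × (W n → W n)) := by
  set K := Fintype.card (W n → W n) with hK
  set q := Fintype.card (W n) with hq
  have hcoll : (Finset.univ.filter fun f : W n → W n =>
      x.2 ^^^ f x.1 = x'.2 ^^^ f x'.1).card * q ≤ K := by
    by_cases h1 : x.1 = x'.1
    · -- equal left halves and distinct right halves never meet in the middle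
      rw [Finset.filter_false_of_mem]
      · simp
      · intro f _ he
        rw [h1] at he
        exact h (Prod.ext h1 ((BitVec.xor_left_inj _).1 he))
    · refine le_trans (Nat.mul_le_mul_right _ (Finset.card_le_card ?_))
        (card_xor_eq_mul_le h1 (x.2 ^^^ x'.2))
      intro f
      simp only [Finset.mem_filter, Finset.mem_univ, true_and]
      intro he
      exact (xor_swap he).symm
  have hfib : ∀ f1 : W n → W n,
      (Finset.univ.filter fun f2 : W n → W n =>
        (feistF f1 f2 x).1 ^^^ (feistF f1 f2 x').1 = a).card * q
      ≤ K + (if x.2 ^^^ f1 x.1 = x'.2 ^^^ f1 x'.1 then K * q else 0) := by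
    intro f1
    split_ifs with hm
    · exact le_add_left (Nat.mul_le_mul_right _ (Finset.card_le_univ _))
    · refine le_trans (Nat.mul_le_mul_right _ (Finset.card_le_card ?_))
        (card_xor_eq_mul_le hm (x.1 ^^^ x'.1 ^^^ a))
      intro f2 hf2
      have he := (Finset.mem_filter.1 hf2).2
      simp only [feistF] at he
      refine Finset.mem_filter.2 ⟨Finset.mem_univ _, ?_⟩
      have h1 : x.1 ^^^ x'.1 ^^^ (f2 (x.2 ^^^ f1 x.1) ^^^ f2 (x'.2 ^^^ f1 x'.1)) = a := by
        rw [← he]; ac_rfl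
      rw [← h1, ← BitVec.xor_assoc, BitVec.xor_self, BitVec.zero_xor]
  have hsum : (Finset.univ.filter fun f : (W n → W n) × (W n → W n) =>
        (feistF f.1 f.2 x).1 ^^^ (feistF f.1 f.2 x').1 = a).card
      = ∑ f1 : W n → W n, (Finset.univ.filter fun f2 : W n → W n =>
        (feistF f1 f2 x).1 ^^^ (feistF f1 f2 x').1 = a).card := by
    simp only [Finset.card_filter]
    rw [Fintype.sum_prod_type]
  rw [hsum, Finset.sum_mul]
  refine (Finset.sum_le_sum fun f1 _ => hfib f1).trans ?_
  rw [Finset.sum_add_distrib, ← Finset.sum_filter, Finset.sum_const, Finset.sum_const,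
    Finset.card_univ, Fintype.card_prod, ← hK, smul_eq_mul, smul_eq_mul]
  nlinarith [Nat.mul_le_mul_left K hcoll]

/-- The event `π(x)_L ⊕ π(x')_L = ρ(y)_L ⊕ ρ(y')_L`, where `ρ = ω⁻¹` is the Feistel permutation with
round functions `F.2`. -/
def Event {n : ℕ} (x x' y y' : TW n) (F : FT n) : Prop :=
  (feistF F.1.1 F.1.2 x).1 ^^^ (feistF F.1.1 F.1.2 x').1
    = (feistF F.2.1 F.2.2 y).1 ^^^ (feistF F.2.1 F.2.2 y').1

open Classical in
/-- Each event involving two distinct inputs or two distinct outputs has probability at most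
`2 / 2 ^ n`: fix the round functions of the other permutation. -/
lemma card_event_mul_le {n : ℕ} {x x' y y' : TW n} (h : x ≠ x' ∨ y ≠ y') :
    (Finset.univ.filter fun F : FT n => Event x x' y y' F).card * 2 ^ n
      ≤ 2 * Fintype.card (FT n) := by
  have hq : Fintype.card (W n) = 2 ^ n := by
    rw [Fintype.card_congr (⟨BitVec.toFin, BitVec.ofFin, fun _ => rfl, fun _ => rfl⟩ :
      W n ≃ Fin (2 ^ n)), Fintype.card_fin]
  rw [← hq, Fintype.card_prod]
  rcases h with h | h
  · rw [Finset.card_filter, Fintype.sum_prod_type_right, Finset.sum_mul]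
    refine (Finset.sum_le_sum fun G _ => ?_).trans (le_of_eq (?_ :
      ∑ _G : (W n → W n) × (W n → W n),
        2 * Fintype.card ((W n → W n) × (W n → W n)) = _))
    · rw [← Finset.card_filter]
      refine le_trans (Nat.mul_le_mul_right _ (Finset.card_le_card fun f hf => ?_))
        (card_feist_mul_le h ((feistF G.1 G.2 y).1 ^^^ (feistF G.1 G.2 y').1))
      exact Finset.mem_filter.2 ⟨Finset.mem_univ _, (Finset.mem_filter.1 hf).2⟩
    · rw [Finset.sum_const, Finset.card_univ, smul_eq_mul]; ring
  · rw [Finset.card_filter, Fintype.sum_prod_type, Finset.sum_mul]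
    refine (Finset.sum_le_sum fun G _ => ?_).trans (le_of_eq (?_ :
      ∑ _G : (W n → W n) × (W n → W n),
        2 * Fintype.card ((W n → W n) × (W n → W n)) = _))
    · rw [← Finset.card_filter]
      refine le_trans (Nat.mul_le_mul_right _ (Finset.card_le_card fun f hf => ?_))
        (card_feist_mul_le h ((feistF G.1 G.2 x).1 ^^^ (feistF G.1 G.2 x').1))
      exact Finset.mem_filter.2 ⟨Finset.mem_univ _, (Finset.mem_filter.1 hf).2.symm⟩
    · rw [Finset.sum_const, Finset.card_univ, smul_eq_mul]; ring

/-! ### Deterministic criteria for allowability -/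

/-- The internal condition implies the input and output conditions: compare `(x, y)` with
`(x', y)`, respectively with `(x, y')`. -/
lemma allowable_of_internal {n : ℕ} {A : PF n} (hinj : PInj A)
    (h : ∀ x y x' y', A x = some y → x' ∈ piDom A → y' ∈ piIm A →
      (x, y) ≠ (x', y') → x.1 ^^^ y.1 ≠ x'.1 ^^^ y'.1) : AllowableI A := by
  refine ⟨hinj, ?_, ?_, h⟩
  · intro x x' hx hx' hne he
    obtain ⟨y, hy⟩ := Option.ne_none_iff_exists'.1 hx
    exact h x y x' y hy hx' ⟨x, hy⟩ (by simp [hne]) (by rw [he])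
  · rintro y y' ⟨x, hx⟩ hy' hne he
    refine h x y x y' hx ?_ hy' (by simp [hne]) (by rw [he])
    simp [piDom, hx]

open Classical in
/-- If the domain has at most `t` points with `t + t ^ 2 + t ^ 3 < 2 ^ n`, the only obstruction to
allowing `u` is an internal collision between `u_L`, an input-output pair and an output. -/
lemma allows_of_forall_ne {n t : ℕ} {A : PF n} (hA : AllowableI A)
    (hcard : (Finset.univ.filter fun a => A a ≠ none).card ≤ t) (ht : t + t ^ 2 + t ^ 3 < 2 ^ n)
    {u : TW n} (hu : A u = none)
    (h : ∀ x y y', A x = some y → y' ∈ piIm A → u.1 ^^^ x.1 ≠ y.1 ^^^ y'.1) : Allows A u := by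
  set D := Finset.univ.filter fun a => A a ≠ none with hD
  -- the default value of `getD` is never used on `D`
  let Y : TW n → W n := fun a => ((A a).getD 0).1
  have hY : ∀ a b, A a = some b → Y a = b.1 := by
    intro a b hab
    simp [Y, hab]
  have hmem : ∀ a b, A a = some b → a ∈ D := by
    intro a b hab
    simp [hD, hab]
  let S1 := D.image Y
  let S2 := (D ×ˢ D).image fun p => u.1 ^^^ p.1.1 ^^^ Y p.2
  let S3 := (D ×ˢ D ×ˢ D).image fun p => p.1.1 ^^^ p.2.1.1 ^^^ Y p.2.2
  have hlt : (S1 ∪ S2 ∪ S3).card < Fintype.card (W n) := by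
    have hq : Fintype.card (W n) = 2 ^ n := by
      rw [Fintype.card_congr (⟨BitVec.toFin, BitVec.ofFin, fun _ => rfl, fun _ => rfl⟩ :
        W n ≃ Fin (2 ^ n)), Fintype.card_fin]
    rw [hq]
    have h1 : S1.card ≤ t := Finset.card_image_le.trans hcard
    have h2 : S2.card ≤ t ^ 2 := by
      refine Finset.card_image_le.trans ?_
      rw [Finset.card_product, pow_two]
      exact Nat.mul_le_mul hcard hcard
    have h3 : S3.card ≤ t ^ 3 := by
      refine Finset.card_image_le.trans ?_
      rw [Finset.card_product, Finset.card_product]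
      calc _ ≤ t * (t * t) := Nat.mul_le_mul hcard (Nat.mul_le_mul hcard hcard)
        _ = t ^ 3 := by ring
    have h4 := Finset.card_union_le (S1 ∪ S2) S3
    have h5 := Finset.card_union_le S1 S2
    omega
  obtain ⟨c, hc⟩ : ∃ c, c ∉ S1 ∪ S2 ∪ S3 := by
    by_contra! hall
    rw [Finset.eq_univ_iff_forall.2 hall, Finset.card_univ] at hlt
    exact lt_irrefl _ hlt
  simp only [Finset.mem_union, not_or] at hc
  obtain ⟨⟨hc1, hc2⟩, hc3⟩ := hc
  have k1 : ∀ x y, A x = some y → c ≠ y.1 := by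
    rintro x y hx rfl
    exact hc1 (Finset.mem_image.2 ⟨x, hmem _ _ hx, hY _ _ hx⟩)
  have k2 : ∀ x y x' y', A x = some y → A x' = some y' → c ≠ u.1 ^^^ x.1 ^^^ y'.1 := by
    intro x y x' y' hx hx' he
    refine hc2 (Finset.mem_image.2
      ⟨(x, x'), Finset.mem_product.2 ⟨hmem _ _ hx, hmem _ _ hx'⟩, ?_⟩)
    simp only [hY _ _ hx', he]
  have k3 : ∀ x y x' y' x'' y'', A x = some y → A x' = some y' → A x'' = some y'' →
      c ≠ x.1 ^^^ x'.1 ^^^ y''.1 := by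
    intro x y x' y' x'' y'' hx hx' hx'' he
    refine hc3 (Finset.mem_image.2 ⟨(x, x', x''), Finset.mem_product.2
      ⟨hmem _ _ hx, Finset.mem_product.2 ⟨hmem _ _ hx', hmem _ _ hx''⟩⟩, ?_⟩)
    simp only [hY _ _ hx'', he]
  set v : TW n := (c, 0) with hv
  refine ⟨v, ?_⟩
  have hB : ∀ a b, Function.update A u (some v) a = some b → (a = u ∧ b = v) ∨ A a = some b := by
    intro a b hab
    by_cases hau : a = u
    · subst hau
      rw [Function.update_self] at hab
      exact Or.inl ⟨rfl, (Option.some.inj hab).symm⟩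
    · rw [Function.update_of_ne hau] at hab
      exact Or.inr hab
  apply allowable_of_internal
  · intro x x' y hx hx'
    rcases hB _ _ hx with ⟨rfl, rfl⟩ | gx <;> rcases hB _ _ hx' with ⟨rfl, he⟩ | gx'
    · rfl
    · exact absurd rfl (k1 _ _ gx')
    · subst he
      exact absurd rfl (k1 _ _ gx)
    · exact hA.1 _ _ _ gx gx'
  · rintro x y x' y' hx hx' ⟨x'', hx''⟩ hne he
    obtain ⟨z, hz⟩ := Option.ne_none_iff_exists'.1 hx'
    rcases hB _ _ hx with ⟨rfl, rfl⟩ | gx <;> rcases hB _ _ hz with ⟨rfl, rfl⟩ | gz <;>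
      rcases hB _ _ hx'' with ⟨rfl, rfl⟩ | gx''
    · exact hne rfl
    · exact k1 _ _ gx'' ((BitVec.xor_right_inj _).1 he)
    · exact h x' z z gz ⟨_, gz⟩ ((xor_swap he).trans (by simp))
    · exact k2 _ _ _ _ gz gx'' (xor_solve he)
    · exact k2 _ _ _ _ gx gx (xor_solve he.symm)
    · exact h x y y' gx ⟨_, gx''⟩ ((BitVec.xor_comm _ _).trans (xor_swap he))
    · exact k3 _ _ _ _ _ _ gz gx gx (xor_solve he.symm)
    · exact hA.2.2.2 _ _ _ _ gx (by simp [piDom, gz]) ⟨_, gx''⟩ hne he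

lemma twirl_eq_some {n : ℕ} {π ω : Equiv.Perm (TW n)} {I : PF n} {a b : TW n}
    (h : twirl π ω I a = some b) : ∃ x y, I x = some y ∧ π x = a ∧ ω.symm y = b := by
  obtain ⟨y, hy, hb⟩ := Option.map_eq_some_iff.1 h
  exact ⟨_, y, hy, π.apply_symm_apply a, hb⟩

/-- A sample that fails to resolve `I` lies in one of the collision events. -/
lemma exists_event_of_not_resolves {n : ℕ} {I : PF n} (hI : PInj I) {F : FT n}
    (hF : sampPair F ∉ RI I) :
    ∃ x y x' x'' y', I x = some y ∧ I x' ≠ none ∧ I x'' = some y' ∧ (x ≠ x' ∨ y ≠ y') ∧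
      Event x x' y y' F := by
  by_contra! hno
  refine hF (allowable_of_internal ?_ ?_)
  · intro a a' b ha ha'
    obtain ⟨x, y, hx, rfl, rfl⟩ := twirl_eq_some ha
    obtain ⟨x', y', hx', rfl, hy⟩ := twirl_eq_some ha'
    rw [(sampPair F).2.symm.injective hy] at hx'
    rw [hI _ _ _ hx hx']
  · rintro a b a' b' ha ha' ⟨a'', ha''⟩ hne he
    obtain ⟨z, hz⟩ := Option.ne_none_iff_exists'.1 ha'
    obtain ⟨x, y, hx, rfl, rfl⟩ := twirl_eq_some ha
    obtain ⟨x', z, hx', rfl, rfl⟩ := twirl_eq_some hz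
    obtain ⟨x'', y', hx'', rfl, rfl⟩ := twirl_eq_some ha''
    refine hno x y x' x'' y' hx (by simp [hx']) hx'' ?_ ?_
    · by_contra! hh
      exact hne (by rw [hh.1, hh.2])
    · change (feistF F.1.1 F.1.2 x).1 ^^^ (feistF F.2.1 F.2.2 y).1
        = (feistF F.1.1 F.1.2 x').1 ^^^ (feistF F.2.1 F.2.2 y').1 at he
      exact xor_swap he

open Classical in
/-- A sample that resolves `I` without allowing `π(x)` lies in one of the collision events. -/
lemma exists_event_of_not_allows {n t : ℕ} {I : PF n}
    (hcard : (Finset.univ.filter fun a => I a ≠ none).card ≤ t) (ht : t + t ^ 2 + t ^ 3 < 2 ^ n)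
    {x : TW n} (hx : I x = none) {F : FT n} (hF : sampPair F ∈ RI I) (hF' : sampPair F ∉ RxI I x) :
    ∃ x' y x'' y', I x' = some y ∧ I x'' = some y' ∧ Event x x' y y' F := by
  by_contra! hno
  refine hF' ⟨hF, allows_of_forall_ne hF (le_trans ?_ hcard) ht ?_ ?_⟩
  · refine Finset.card_le_card_of_injOn (sampPair F).1.symm ?_
      ((sampPair F).1.symm.injective.injOn)
    intro a ha
    simpa [twirl] using ha
  · simp [twirl, hx]
  · rintro a b b' ha ⟨a', ha'⟩ he
    obtain ⟨x', y, hx', rfl, rfl⟩ := twirl_eq_some ha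
    obtain ⟨x'', y', hx'', rfl, rfl⟩ := twirl_eq_some ha'
    exact hno x' y x'' y' hx' hx'' he

/-! ### Union bounds over samples -/

open Classical in
/-- Union bound: a set of samples covered by collision events indexed by a finite set `J`. -/
lemma card_mul_le_of_events {n : ℕ} {J : Type*} (s : Finset J) (x x' y y' : J → TW n)
    (hne : ∀ j ∈ s, x j ≠ x' j ∨ y j ≠ y' j) (B : Finset (FT n))
    (hB : ∀ F ∈ B, ∃ j ∈ s, Event (x j) (x' j) (y j) (y' j) F) :
    B.card * 2 ^ n ≤ s.card * (2 * Fintype.card (FT n)) := by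
  have hsub : B ⊆ s.biUnion fun j =>
      Finset.univ.filter fun F : FT n => Event (x j) (x' j) (y j) (y' j) F := by
    intro F hF
    simpa using hB F hF
  calc B.card * 2 ^ n
      ≤ (∑ j ∈ s, (Finset.univ.filter fun F : FT n =>
          Event (x j) (x' j) (y j) (y' j) F).card) * 2 ^ n :=
        Nat.mul_le_mul_right _ ((Finset.card_le_card hsub).trans Finset.card_biUnion_le)
    _ = ∑ j ∈ s, (Finset.univ.filter fun F : FT n =>
          Event (x j) (x' j) (y j) (y' j) F).card * 2 ^ n := Finset.sum_mul _ _ _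
    _ ≤ ∑ _j ∈ s, 2 * Fintype.card (FT n) :=
        Finset.sum_le_sum fun j hj => card_event_mul_le (hne j hj)
    _ = s.card * (2 * Fintype.card (FT n)) := by rw [Finset.sum_const, smul_eq_mul]

open Classical in
lemma card_not_resolves_mul_le {n t : ℕ} {I : PF n} (hI : PInj I)
    (hcard : (Finset.univ.filter fun a => I a ≠ none).card = t) :
    (Finset.univ.filter fun F : FT n => sampPair F ∉ RI I).card * 2 ^ n
      ≤ t ^ 3 * (2 * Fintype.card (FT n)) := by
  set D := Finset.univ.filter fun a => I a ≠ none with hD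
  let Y : TW n → TW n := fun a => (I a).getD 0
  let s := (D ×ˢ D ×ˢ D).filter fun p => p.1 ≠ p.2.1 ∨ Y p.1 ≠ Y p.2.2
  have hs : s.card ≤ t ^ 3 := by
    refine (Finset.card_filter_le _ _).trans ?_
    rw [Finset.card_product, Finset.card_product, hcard]
    exact le_of_eq (by ring)
  refine le_trans (card_mul_le_of_events s (fun p => p.1) (fun p => p.2.1) (fun p => Y p.1)
    (fun p => Y p.2.2) (fun p hp => (Finset.mem_filter.1 hp).2) _ ?_) (Nat.mul_le_mul_right _ hs)
  intro F hF
  obtain ⟨x, y, x', x'', y', hx, hx', hx'', hne, hE⟩ :=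
    exists_event_of_not_resolves hI (Finset.mem_filter.1 hF).2
  refine ⟨(x, x', x''), ?_, ?_⟩
  · simp only [s, Y, hD, Finset.mem_filter, Finset.mem_product, Finset.mem_univ, true_and, hx, hx'',
      Option.getD_some]
    exact ⟨⟨by simp, hx', by simp⟩, hne⟩
  · simpa only [Y, hx, hx'', Option.getD_some] using hE

open Classical in
lemma card_not_allows_mul_le {n t : ℕ} {I : PF n}
    (hcard : (Finset.univ.filter fun a => I a ≠ none).card = t) (ht : t + t ^ 2 + t ^ 3 < 2 ^ n)
    {x : TW n} (hx : I x = none) :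
    (Finset.univ.filter fun F : FT n => sampPair F ∈ RI I ∧ sampPair F ∉ RxI I x).card * 2 ^ n
      ≤ t ^ 2 * (2 * Fintype.card (FT n)) := by
  set D := Finset.univ.filter fun a => I a ≠ none with hD
  let Y : TW n → TW n := fun a => (I a).getD 0
  have hs : (D ×ˢ D).card ≤ t ^ 2 := by
    rw [Finset.card_product, hcard, pow_two]
  refine le_trans (card_mul_le_of_events (D ×ˢ D) (fun _ => x) (fun p => p.1) (fun p => Y p.1)
    (fun p => Y p.2) ?_ _ ?_) (Nat.mul_le_mul_right _ hs)
  · rintro ⟨a, b⟩ hp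
    left
    rintro rfl
    exact (Finset.mem_filter.1 (Finset.mem_product.1 hp).1).2 hx
  · intro F hF
    obtain ⟨hR, hR'⟩ := (Finset.mem_filter.1 hF).2
    obtain ⟨x', y, x'', y', hx', hx'', hE⟩ :=
      exists_event_of_not_allows hcard.le ht hx hR hR'
    refine ⟨(x', x''), ?_, ?_⟩
    · simp [hD, hx', hx'']
    · simpa only [Y, hx', hx'', Option.getD_some] using hE

/-- Under the two-round-Feistel twirl distribution
conditioned on resolving `I`, the inner database allows `π(x)` except with
probability `C·t²/2^n` (counting form over the round-function samples). -/
theorem feistel_twirl_allows_whp :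
    ∃ C c : ℝ, 0 < C ∧ 0 < c ∧ ∀ (n t : ℕ), 1 ≤ n → (t : ℝ) ≤ c * 2 ^ ((n : ℝ) / 3) →
      ∀ I : PF n, PInj I → piSize I = t → ∀ x : TW n, I x = none →
      {F : FT n | sampPair F ∈ RI I}.Nonempty →
      (1 - C * (t : ℝ) ^ 2 / 2 ^ n) * ({F : FT n | sampPair F ∈ RI I}.ncard : ℝ) ≤
        ({F : FT n | sampPair F ∈ RxI I x}.ncard : ℝ) := by
  classical
  refine ⟨4, 1 / 3, by norm_num, by norm_num, ?_⟩
  intro n t _ ht I hI hsize x hx _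
  have hq : (0 : ℝ) < 2 ^ n := by positivity
  have ht3 : 27 * (t : ℝ) ^ 3 ≤ 2 ^ n := by
    have h1 : (t : ℝ) ^ 3 ≤ (1 / 3 * (2 : ℝ) ^ ((n : ℝ) / 3)) ^ 3 :=
      pow_le_pow_left₀ (by positivity) ht 3
    have h2 : ((2 : ℝ) ^ ((n : ℝ) / 3)) ^ 3 = 2 ^ n := by
      rw [← Real.rpow_natCast, ← Real.rpow_mul (by norm_num)]
      norm_num
    rw [mul_pow, h2] at h1
    linarith
  have ht3' : 27 * t ^ 3 ≤ 2 ^ n := by exact_mod_cast ht3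
  have htlt : t + t ^ 2 + t ^ 3 < 2 ^ n := by
    have h0 : 0 < 2 ^ n := by positivity
    have h1 : t ≤ t ^ 3 := Nat.le_self_pow (by norm_num) t
    have h2 : t ^ 2 ≤ t ^ 3 := by
      rcases Nat.eq_zero_or_pos t with rfl | hpos
      · simp
      · exact Nat.pow_le_pow_right hpos (by norm_num)
    omega
  have hcard : (Finset.univ.filter fun a => I a ≠ none).card = t := by
    rw [← hsize, piSize, ← Set.ncard_coe_finset]
    congr 1
    ext a
    simp [piDom]
  have hconv : ∀ P : FT n → Prop, {F | P F}.ncard = (Finset.univ.filter P).card := by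
    intro P
    rw [← Set.ncard_coe_finset]
    simp
  rw [hconv, hconv]
  have hbad := card_not_allows_mul_le hcard htlt hx
  have hres := card_not_resolves_mul_le hI hcard
  have htot := Finset.card_filter_add_card_filter_not (s := (Finset.univ : Finset (FT n)))
    (fun F => sampPair F ∈ RI I)
  rw [Finset.card_univ] at htot
  have hsplit : (Finset.univ.filter fun F : FT n => sampPair F ∈ RI I).card ≤
      (Finset.univ.filter fun F : FT n => sampPair F ∈ RxI I x).card +
      (Finset.univ.filter fun F : FT n => sampPair F ∈ RI I ∧ sampPair F ∉ RxI I x).card := by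
    refine le_trans (Finset.card_le_card ?_) (Finset.card_union_le _ _)
    intro F
    simp only [Finset.mem_filter, Finset.mem_union, Finset.mem_univ, true_and]
    tauto
  generalize (Finset.univ.filter fun F : FT n => sampPair F ∈ RI I).card = r at *
  generalize (Finset.univ.filter fun F : FT n => sampPair F ∈ RxI I x).card = g at *
  generalize (Finset.univ.filter fun F : FT n =>
    sampPair F ∈ RI I ∧ sampPair F ∉ RxI I x).card = b at *
  generalize (Finset.univ.filter fun F : FT n => sampPair F ∉ RI I).card = m at *
  generalize Fintype.card (FT n) = T at *
  have hbad' : (b : ℝ) * 2 ^ n ≤ t ^ 2 * (2 * T) := by exact_mod_cast hbad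
  have hres' : (m : ℝ) * 2 ^ n ≤ t ^ 3 * (2 * T) := by exact_mod_cast hres
  have htot' : (r : ℝ) + m = T := by exact_mod_cast htot
  have hsplit' : (r : ℝ) ≤ g + b := by exact_mod_cast hsplit
  have hT0 : (0 : ℝ) ≤ T := Nat.cast_nonneg _
  have hm : (m : ℝ) ≤ T / 2 := by
    have h1 : (m : ℝ) * 2 ^ n ≤ T / 2 * 2 ^ n := by nlinarith
    exact le_of_mul_le_mul_right h1 hq
  have hTr : (T : ℝ) ≤ 2 * r := by linarith
  have hb : (b : ℝ) ≤ 4 * (t : ℝ) ^ 2 / 2 ^ n * r := by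
    rw [div_mul_eq_mul_div, le_div_iff₀ hq]
    nlinarith [mul_le_mul_of_nonneg_left hTr (sq_nonneg (t : ℝ))]
  linarith

end CPO
end
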